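/- Let d ≥ 3 and p ∈ (p_c^site(ℤ^d), 1 − p_c^site(ℤ^d)). Then for every fixed word ξ ∈ Ξ, ℙ_p(ξ ∈ S_∞) = 1, i.e. almost surely ξ is seen from some vertex of ℤ^d. -/

import Mathlib

open MeasureTheory Set

namespace PercWords

/-- Vertices of the hypercubic lattice `ℤ^d`. -/
abbrev Vtx (d : ℕ) := Fin d → ℤ

/-- Site percolation configurations on `ℤ^d` (`true` = state 1, `false` = state 0). -/
abbrev Config (d : ℕ) := Vtx d → Bool

/-- `u ∼ v` : the Euclidean distance between `u` and `v` is `1`. -/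
def adj {d : ℕ} (u v : Vtx d) : Prop := (∑ i, (u i - v i) ^ 2) = 1

/-- `μ` is Bernoulli site percolation with parameter `p` on the index set `ι`:
a probability measure under which, independently, each site has state `true`
with probability `p` and state `false` with probability `1 - p`. -/
def IsBernoulliFam {ι : Type} (p : ℝ) (μ : Measure (ι → Bool)) : Prop :=
  IsProbabilityMeasure μ ∧
    ∀ (s : Finset ι) (f : ι → Bool),
      μ {ω | ∀ v ∈ s, ω v = f v} =
        ∏ v ∈ s, ENNReal.ofReal (if f v then p else 1 - p)

/-- The word `ξ` is seen from `v` along an infinite self-avoiding path all of whose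
vertices lie in `A`. -/
def seesWordIn {d : ℕ} (ω : Config d) (ξ : ℕ → Bool) (A : Set (Vtx d)) (v : Vtx d) : Prop :=
  ∃ γ : ℕ → Vtx d, γ 0 = v ∧ Function.Injective γ ∧
    (∀ i, adj (γ i) (γ (i + 1))) ∧ (∀ i, γ i ∈ A) ∧ (∀ i, ω (γ i) = ξ i)

/-- The word `ξ` is seen from `v` in the configuration `ω`. -/
def seesWord {d : ℕ} (ω : Config d) (ξ : ℕ → Bool) (v : Vtx d) : Prop :=
  seesWordIn ω ξ Set.univ v

/-- `v` lies in an infinite connected set of `1`-vertices of `ω`. -/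
def PercolatesAt {d : ℕ} (ω : Config d) (v : Vtx d) : Prop :=
  ∃ C : Set (Vtx d), v ∈ C ∧ C.Infinite ∧ (∀ u ∈ C, ω u = true) ∧
    ∀ u₁ ∈ C, ∀ u₂ ∈ C, ∃ n : ℕ, ∃ γ : ℕ → Vtx d,
      γ 0 = u₁ ∧ γ n = u₂ ∧ (∀ i < n, adj (γ i) (γ (i + 1))) ∧ (∀ i ≤ n, γ i ∈ C)

/-- The critical point of Bernoulli site percolation on `ℤ^d`, relative to a family
`ℙ p` of Bernoulli site percolation measures: the infimum of the set of parameters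
for which the origin lies in an infinite connected set of `1`-vertices with positive
probability. -/
noncomputable def pcSite (d : ℕ) (ℙ : ℝ → Measure (Config d)) : ℝ :=
  sInf {p : ℝ | p ∈ Set.Icc (0 : ℝ) 1 ∧ 0 < ℙ p {ω | PercolatesAt ω (fun _ => 0)}}




section gen
open ProbabilityTheory
variable {V : Type}

/-- self-avoiding word path inside `U`, reaching `T`. -/
inductive Good (R : V → V → Prop) (T : Set V) (ω : V → Bool) (ξ : ℕ → Bool) :
    Set V → V → ℕ → Prop
  | base {U : Set V} {v : V} {i : ℕ} : v ∈ U → ω v = ξ i → v ∈ T → Good R T ω ξ U v i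
  | step {U : Set V} {v w : V} {i : ℕ} : v ∈ U → ω v = ξ i → R v w →
      Good R T ω ξ (U \ {v}) w (i + 1) → Good R T ω ξ U v i

variable {R : V → V → Prop} {T : Set V}

lemma Good.mono {ω : V → Bool} {ξ : ℕ → Bool} {U : Set V} {v : V} {i : ℕ}
    (h : Good R T ω ξ U v i) : ∀ {U' : Set V}, U ⊆ U' → Good R T ω ξ U' v i := by
  induction h with
  | base hv hw hT => intro U' hU; exact .base (hU hv) hw hT
  | step hv hw hR _ ih =>
    intro U' hU
    exact .step (hU hv) hw hR (ih (Set.sdiff_subset_sdiff_left hU))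

lemma Good.mem {ω : V → Bool} {ξ : ℕ → Bool} {U : Set V} {v : V} {i : ℕ}
    (h : Good R T ω ξ U v i) : v ∈ U := by
  cases h <;> assumption

lemma Good.congr {ω ω' : V → Bool} {ξ : ℕ → Bool} {U : Set V} {v : V} {i : ℕ}
    (h : Good R T ω ξ U v i) (hω : ∀ u ∈ U, ω u = ω' u) : Good R T ω' ξ U v i := by
  induction h with
  | base hv hw hT => exact .base hv (by rw [← hω _ hv]; exact hw) hT
  | step hv hw hR _ ih =>
    exact .step hv (by rw [← hω _ hv]; exact hw) hR (ih fun u hu => hω u hu.1)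

lemma Good.index {ω : V → Bool} {U : Set V} {v : V} {i : ℕ}
    (h : Good R T ω (fun _ => true) U v i) : ∀ j, Good R T ω (fun _ => true) U v j := by
  induction h with
  | base hv hw hT => intro j; exact .base hv hw hT
  | step hv hw hR _ ih => intro j; exact .step hv hw hR (ih _)

lemma Good.split {ω : V → Bool} {ξ : ℕ → Bool} {U : Set V} {w : V} {j : ℕ}
    (h : Good R T ω ξ U w j) (v : V) :
    Good R T ω ξ (U \ {v}) w j ∨
      (ω v = true ∨ ξ ≠ fun _ => true) ∧
        (v ∈ T ∨ ∃ w' j', R v w' ∧ Good R T ω ξ (U \ {v}) w' j') := by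
  induction h with
  | @base U w j hv hw hT =>
    by_cases hvw : w = v
    · subst hvw
      right
      refine ⟨?_, .inl hT⟩
      by_cases hx : ξ = fun _ => true
      · left; rw [hw, hx]
      · exact .inr hx
    · exact .inl (.base ⟨hv, hvw⟩ hw hT)
  | @step U w w2 j hv hw hR hG ih =>
    by_cases hvw : w = v
    · subst hvw
      right
      refine ⟨?_, .inr ⟨w2, j + 1, hR, hG⟩⟩
      by_cases hx : ξ = fun _ => true
      · left; rw [hw, hx]
      · exact .inr hx
    · rcases ih with ih | ⟨h1, ih | ⟨w', j', hR', hG'⟩⟩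
      · left
        refine .step ⟨hv, hvw⟩ hw hR ?_
        rwa [Set.sdiff_sdiff_comm]
      · exact .inr ⟨h1, .inl ih⟩
      · exact .inr ⟨h1, .inr ⟨w', j', hR', hG'.mono (by intro x hx; exact ⟨hx.1.1, hx.2⟩)⟩⟩

/-- event -/
def Ev (R : V → V → Prop) (T : Set V) (ξ : ℕ → Bool) (U : Set V) (C : Set (V × ℕ)) :
    Set (V → Bool) := {ω | ∃ c ∈ C, Good R T ω ξ U c.1 c.2}

/-- finitely supported event -/
def Dep (A : Set (V → Bool)) (S : Set V) : Prop :=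
  ∀ ω ω' : V → Bool, (∀ v ∈ S, ω v = ω' v) → ω ∈ A → ω' ∈ A

lemma dep_Ev {ξ : ℕ → Bool} {U : Set V} {C : Set (V × ℕ)} : Dep (Ev R T ξ U C) U := by
  rintro ω ω' h ⟨c, hc, hG⟩
  exact ⟨c, hc, hG.congr h⟩

lemma Dep.eq_preimage {A : Set (V → Bool)} {S : Finset V} (h : Dep A S) :
    A = S.restrict ⁻¹' (S.restrict '' A) := by
  ext ω
  constructor
  · intro hω; exact ⟨ω, hω, rfl⟩
  · rintro ⟨ω', hω', he⟩
    exact h ω' ω (fun v hv => congrFun he ⟨v, hv⟩) hω'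

lemma Dep.measurable {A : Set (V → Bool)} {S : Finset V} (h : Dep A S) : MeasurableSet A := by
  rw [h.eq_preimage]
  exact (Finset.measurable_restrict S) (Set.toFinite _).measurableSet

/-- marginal -/
noncomputable def bern (p : ℝ) : Measure Bool :=
  ENNReal.ofReal p • Measure.dirac true + ENNReal.ofReal (1 - p) • Measure.dirac false

lemma bern_prob {p : ℝ} (h0 : 0 ≤ p) (h1 : p ≤ 1) : IsProbabilityMeasure (bern p) := by
  constructor
  simp [bern, ← ENNReal.ofReal_add h0 (sub_nonneg.2 h1)]

lemma bern_singleton (p : ℝ) (b : Bool) :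
    bern p {b} = ENNReal.ofReal (if b then p else 1 - p) := by
  cases b <;> simp [bern]

lemma IsBernoulliFam.eq {p : ℝ} (h0 : 0 ≤ p) (h1 : p ≤ 1) {μ : Measure (V → Bool)}
    (h : IsBernoulliFam p μ) : μ = Measure.infinitePi (fun _ : V => bern p) := by
  classical
  have := bern_prob h0 h1
  have := h.1
  have : IsProjectiveLimit μ (fun I : Finset V => Measure.pi (fun _ : I => bern p)) := by
    intro I
    refine Measure.ext_of_singleton (fun g => ?_)
    rw [Measure.map_apply (Finset.measurable_restrict I) (measurableSet_singleton g),
      Measure.pi_singleton]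
    have := h.2 I (fun v => if hv : v ∈ I then g ⟨v, hv⟩ else true)
    have e : (I.restrict ⁻¹' {g} : Set (V → Bool)) =
        {ω | ∀ v ∈ I, ω v = (fun v => if hv : v ∈ I then g ⟨v, hv⟩ else true) v} := by
      ext ω
      simp only [mem_preimage, mem_singleton_iff, mem_ofPred_eq]
      constructor
      · rintro rfl v hv; simp [hv]
      · intro hh; ext ⟨v, hv⟩; simpa [hv] using hh v hv
    rw [e, this, ← Finset.prod_coe_sort]
    refine Finset.prod_congr rfl fun v _ => ?_
    rw [bern_singleton]; simp
  exact this.unique (Measure.isProjectiveLimit_infinitePi _)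

lemma IsBernoulliFam.inter {p : ℝ} (h0 : 0 ≤ p) (h1 : p ≤ 1) {μ : Measure (V → Bool)}
    (h : IsBernoulliFam p μ) {A B : Set (V → Bool)} {S S' : Finset V} (hS : Disjoint S S')
    (hA : Dep A S) (hB : Dep B S') : μ.real (A ∩ B) = μ.real A * μ.real B := by
  have := bern_prob h0 h1
  have := h.1
  have hi : iIndepFun (fun (v : V) (ω : V → Bool) => ω v) μ := by
    rw [h.eq h0 h1]
    exact iIndepFun_infinitePi (P := fun _ : V => bern p) (X := fun _ b => b)
      (fun i => measurable_id)
  have := hi.indepFun_finset S S' hS (fun v => measurable_pi_apply v)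
  have h2 := this.measure_inter_preimage_eq_mul (S.restrict '' A) (S'.restrict '' B)
    (Set.toFinite _).measurableSet (Set.toFinite _).measurableSet
  have eA := hA.eq_preimage
  have eB := hB.eq_preimage
  rw [measureReal_def, measureReal_def, measureReal_def, ← ENNReal.toReal_mul]
  congr 1
  conv_lhs => rw [eA, eB]
  conv_rhs => rw [eA, eB]
  exact h2

lemma IsBernoulliFam.coord {p : ℝ} (h0 : 0 ≤ p) (h1 : p ≤ 1) {μ : Measure (V → Bool)}
    (h : IsBernoulliFam p μ) (v : V) (b : Bool) :
    μ.real {ω | ω v = b} = if b then p else 1 - p := by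
  have := h.2 {v} (fun _ => b)
  simp only [Finset.mem_singleton, forall_eq, Finset.prod_singleton] at this
  rw [measureReal_def, this, ENNReal.toReal_ofReal]
  split_ifs <;> linarith

lemma dep_coord (v : V) (b : Bool) : Dep {ω : V → Bool | ω v = b} (({v} : Finset V) : Set V) := by
  intro ω ω' hh hω
  have := hh v (by simp)
  simp only [mem_ofPred_eq] at *
  rw [← this]; exact hω

lemma compare {p q : ℝ} (hq0 : 0 ≤ q) (hqp : q ≤ p) (hqp' : q ≤ 1 - p)
    {μ ν : Measure (V → Bool)} (hμ : IsBernoulliFam q μ) (hν : IsBernoulliFam p ν)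
    (ξ : ℕ → Bool) : ∀ (n : ℕ) (U : Finset V), U.card = n → ∀ C : Set (V × ℕ),
      μ.real (Ev R T (fun _ => true) U C) ≤ ν.real (Ev R T ξ U C) := by
  classical
  have := hμ.1
  have := hν.1
  intro n
  induction n with
  | zero =>
    intro U hU C
    have : Ev R T (fun _ => true) (U : Set V) C = ∅ := by
      ext ω
      simp only [Ev, mem_ofPred_eq, mem_empty_iff_false, iff_false]
      rintro ⟨c, hc, hG⟩
      have := hG.mem
      simp [Finset.card_eq_zero.1 hU] at this
    rw [this]; simp
  | succ n ih =>
    intro U hU C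
    by_cases hex : ∃ c ∈ C, c.1 ∈ U
    swap
    · have : Ev R T (fun _ => true) (U : Set V) C = ∅ := by
        ext ω
        simp only [Ev, mem_ofPred_eq, mem_empty_iff_false, iff_false]
        rintro ⟨c, hc, hG⟩
        exact hex ⟨c, hc, hG.mem⟩
      rw [this]; simp
    obtain ⟨⟨v, i⟩, hc, hv⟩ := hex
    simp only at hv
    set U' := U.erase v with hU'
    have hUc : (U' : Set V) = (U : Set V) \ {v} := by simp [hU']
    have hcard : U'.card = n := by rw [hU', Finset.card_erase_of_mem hv, hU]; rfl
    set C' : Set (V × ℕ) := C ∪ {c | R v c.1 ∧ c.2 = i + 1} with hC'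
    have hdisj : Disjoint ({v} : Finset V) U' := by simp [hU']
    -- the events
    let A1 : (ℕ → Bool) → Set (V → Bool) := fun ζ => {ω | v ∈ T ∨ ω ∈ Ev R T ζ U' C'}
    let A0 : (ℕ → Bool) → Set (V → Bool) := fun ζ => Ev R T ζ U' C
    have dA0 : ∀ ζ, Dep (A0 ζ) U' := fun ζ => dep_Ev
    have dA1 : ∀ ζ, Dep (A1 ζ) U' := by
      intro ζ ω ω' hh hω
      exact hω.imp id (dep_Ev ω ω' hh)
    have h01 : A0 ξ ⊆ A1 ξ := by
      rintro ω ⟨c, hc, hG⟩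
      exact .inr ⟨c, .inl hc, hG⟩
    have i0 : μ.real (A0 fun _ => true) ≤ ν.real (A0 ξ) := ih U' hcard C
    have i1 : μ.real (A1 fun _ => true) ≤ ν.real (A1 ξ) := by
      by_cases hT : v ∈ T
      · simp [A1, hT]
      · simpa [A1, hT] using ih U' hcard C'
    have up : μ.real (Ev R T (fun _ => true) U C) ≤
        q * μ.real (A1 fun _ => true) + (1 - q) * μ.real (A0 fun _ => true) := by
      have e1 := hμ.inter hq0 (by linarith) hdisj (dep_coord v true) (dA1 fun _ => true)
      have e0 := hμ.inter hq0 (by linarith) hdisj (dep_coord v false) (dA0 fun _ => true)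
      rw [hμ.coord hq0 (by linarith)] at e1 e0
      simp only [if_true, Bool.false_eq_true, if_false] at e1 e0
      rw [← e1, ← e0]
      refine (measureReal_mono ?_).trans (measureReal_union_le _ _)
      rintro ω ⟨c, hcC, hG⟩
      have hs := hG.split v
      rw [← hUc] at hs
      cases hωv : ω v with
      | false =>
        right
        refine ⟨hωv, ?_⟩
        rcases hs with hs | ⟨h1 | h1, -⟩
        · exact ⟨c, hcC, hs⟩
        · rw [hωv] at h1; cases h1
        · exact absurd rfl h1
      | true =>
        left
        refine ⟨hωv, ?_⟩
        rcases hs with hs | ⟨-, hT | ⟨w', j', hR, hG'⟩⟩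
        · exact .inr ⟨c, .inl hcC, hs⟩
        · exact .inl hT
        · exact .inr ⟨(w', i + 1), .inr ⟨hR, rfl⟩, hG'.index _⟩
    have key : ∀ r : ℝ, r = (if ξ i then p else 1 - p) →
        r * ν.real (A1 ξ) + (1 - r) * ν.real (A0 ξ) ≤ ν.real (Ev R T ξ U C) := by
      rintro r hr
      have e1 := hν.inter (by linarith) (by linarith) hdisj (dep_coord v (ξ i)) (dA1 ξ)
      have e0 := hν.inter (by linarith) (by linarith) hdisj (dep_coord v (!ξ i)) (dA0 ξ)
      rw [hν.coord (by linarith) (by linarith)] at e1 e0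
      have hr' : (if (!ξ i) = true then p else 1 - p) = 1 - r := by
        rw [hr]; cases ξ i <;> simp
      rw [← hr] at e1
      rw [hr'] at e0
      rw [← e1, ← e0, ← measureReal_union]
      · refine measureReal_mono ?_
        rintro ω (⟨hω, hω' | ⟨c, hcC | ⟨hR, hci⟩, hG⟩⟩ | ⟨hω, c, hcC, hG⟩)
        · exact ⟨(v, i), hc, .base hv hω hω'⟩
        · exact ⟨c, hcC, hG.mono (by rw [hUc]; exact Set.sdiff_subset)⟩
        · refine ⟨(v, i), hc, .step hv hω hR ?_⟩
          rw [← hUc, ← hci]; exact hG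
        · exact ⟨c, hcC, hG.mono (by rw [hUc]; exact Set.sdiff_subset)⟩
      · rw [Set.disjoint_left]
        rintro ω ⟨h, -⟩ ⟨h', -⟩
        simp only [mem_ofPred_eq] at h h'
        rw [h] at h'
        cases hx : ξ i <;> simp [hx] at h'
      · exact ((dep_coord v _).measurable).inter (dA0 ξ).measurable
    have k := key _ rfl
    have hr : q ≤ (if ξ i then p else 1 - p) := by split_ifs <;> assumption
    have hr1 : (if ξ i then p else 1 - p) ≤ 1 := by split_ifs <;> linarith
    generalize (if ξ i then p else 1 - p) = r at *
    have hb : ν.real (A0 ξ) ≤ ν.real (A1 ξ) := measureReal_mono h01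
    have m1 : q * μ.real (A1 fun _ => true) ≤ q * ν.real (A1 ξ) :=
      mul_le_mul_of_nonneg_left i1 hq0
    have m0 : (1 - q) * μ.real (A0 fun _ => true) ≤ (1 - q) * ν.real (A0 ξ) :=
      mul_le_mul_of_nonneg_left i0 (by linarith)
    have m2 := mul_nonneg (sub_nonneg.2 hr) (sub_nonneg.2 hb)
    nlinarith

end gen

section lattice
variable {d : ℕ}

lemma adj_bound {u v : Vtx d} (h : adj u v) (i : Fin d) : |u i - v i| ≤ 1 := by
  have h1 : (u i - v i) ^ 2 ≤ ∑ i, (u i - v i) ^ 2 :=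
    Finset.single_le_sum (f := fun i => (u i - v i) ^ 2) (fun j _ => sq_nonneg _)
      (Finset.mem_univ i)
  unfold adj at h
  rw [h] at h1
  exact (sq_le_one_iff_abs_le_one _).1 h1

/-- box around `v` -/
noncomputable def bx (v : Vtx d) (n : ℕ) : Finset (Vtx d) :=
  Finset.Icc (fun i => v i - n) (fun i => v i + n)

lemma mem_bx {v w : Vtx d} {n : ℕ} : w ∈ bx v n ↔ ∀ i, |w i - v i| ≤ n := by
  simp only [bx, Finset.mem_Icc, Pi.le_def, abs_le]
  constructor
  · rintro ⟨h1, h2⟩ i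
    have := h1 i
    have := h2 i
    constructor <;> linarith
  · intro h
    constructor <;> intro i <;> have := h i <;> linarith [this.1, this.2]

lemma path_bound {γ : ℕ → Vtx d} {n : ℕ} (h : ∀ i < n, adj (γ i) (γ (i + 1))) :
    ∀ k ≤ n, γ k ∈ bx (γ 0) k := by
  intro k
  induction k with
  | zero => intro _; rw [mem_bx]; simp
  | succ k ih =>
    intro hk
    rw [mem_bx]
    intro i
    have h1 := mem_bx.1 (ih (by omega)) i
    have h2 := adj_bound (h k (by omega)) i
    rw [abs_le] at *
    push_cast
    constructor <;> linarith [h1.1, h1.2, h2.1, h2.2]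

/-- far vertices -/
def far (d n : ℕ) : Set (Vtx d) := {v | ∃ i, (n : ℤ) ≤ |v i|}

lemma walk_good {ω : Config d} {n : ℕ} : ∀ (m : ℕ) (γ : ℕ → Vtx d),
    (∀ i < m, adj (γ i) (γ (i + 1))) → (∀ i ≤ m, ω (γ i) = true) →
    γ 0 ∈ bx (fun _ => 0 : Vtx d) n → γ m ∈ far d n →
    Good adj (far d n) ω (fun _ => true) (bx (fun _ => 0 : Vtx d) n) (γ 0) 0 := by
  intro m
  induction m with
  | zero => intro γ _ h2 h3 h4; exact .base h3 (h2 0 le_rfl) h4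
  | succ m ih =>
    intro γ h1 h2 h3 h4
    by_cases hT : γ 0 ∈ far d n
    · exact .base h3 (h2 0 (by omega)) hT
    have hb : γ 1 ∈ bx (fun _ => 0 : Vtx d) n := by
      rw [mem_bx]
      intro i
      have h5 : ¬ (n : ℤ) ≤ |γ 0 i| := fun h => hT ⟨i, h⟩
      have h6 := adj_bound (h1 0 (by omega)) i
      simp only [zero_add] at h6
      push Not at h5
      have h7 : |γ 1 i| ≤ |γ 0 i| + |γ 0 i - γ 1 i| := by
        have := abs_sub (γ 0 i) (γ 0 i - γ 1 i)
        simpa using this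
      simp only [sub_zero]
      omega
    have hG := ih (fun k => γ (k + 1)) (fun i hi => h1 (i + 1) (by omega))
      (fun i hi => h2 (i + 1) (by omega)) hb h4
    simp only [zero_add] at hG
    rcases hG.split (γ 0) with hs | ⟨-, hs | ⟨w', j', hR, hs⟩⟩
    · exact .step h3 (h2 0 (by omega)) (h1 0 (by omega)) (hs.index _)
    · exact absurd hs hT
    · exact .step h3 (h2 0 (by omega)) hR (hs.index _)

lemma perc_sub (n : ℕ) : {ω : Config d | PercolatesAt ω (fun _ => 0)} ⊆
    Ev adj (far d n) (fun _ => true) (bx (fun _ => 0 : Vtx d) n) {((fun _ => 0), 0)} := by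
  rintro ω ⟨C, h0, hinf, hω, hconn⟩
  obtain ⟨u, huC, hu⟩ := hinf.exists_notMem_finset (bx (fun _ => 0 : Vtx d) n)
  obtain ⟨m, γ, g0, gm, hadj, hC⟩ := hconn _ h0 u huC
  refine ⟨_, rfl, ?_⟩
  have := walk_good (ω := ω) (n := n) m γ hadj (fun i hi => hω _ (hC i hi))
    (by rw [g0, mem_bx]; simp) (by
      rw [gm]
      rw [mem_bx] at hu
      push Not at hu
      obtain ⟨i, hi⟩ := hu
      exact ⟨i, by simpa using hi.le⟩)
  rw [g0] at this
  exact this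

/-- finite word path -/
def WPath (ω : Config d) (ξ : ℕ → Bool) (v : Vtx d) (n : ℕ) (γ : ℕ → Vtx d) : Prop :=
  γ 0 = v ∧ (∀ i ≤ n, ∀ j ≤ n, γ i = γ j → i = j) ∧ (∀ i < n, adj (γ i) (γ (i + 1))) ∧
    (∀ i ≤ n, ω (γ i) = ξ i)

lemma WPath.mono {ω : Config d} {ξ : ℕ → Bool} {v : Vtx d} {n m : ℕ} {γ : ℕ → Vtx d}
    (h : WPath ω ξ v n γ) (hm : m ≤ n) : WPath ω ξ v m γ :=
  ⟨h.1, fun i hi j hj => h.2.1 i (by omega) j (by omega), fun i hi => h.2.2.1 i (by omega),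
    fun i hi => h.2.2.2 i (by omega)⟩

lemma Good.path {ω : Config d} {ξ : ℕ → Bool} {T U : Set (Vtx d)} {v : Vtx d} {i : ℕ}
    (h : Good adj T ω ξ U v i) :
    ∃ m γ, WPath ω (fun k => ξ (i + k)) v m γ ∧ (∀ k ≤ m, γ k ∈ U) ∧ γ m ∈ T := by
  induction h with
  | @base U v i hv hw hT =>
    refine ⟨0, fun _ => v, ⟨rfl, ?_, ?_, ?_⟩, fun _ _ => hv, hT⟩
    · intros; omega
    · intros; omega
    · intro k hk
      obtain rfl : k = 0 := by omega
      simpa using hw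
  | @step U v w i hv hw hR _ ih =>
    obtain ⟨m, γ, ⟨h0, hinj, hadj, hω⟩, hU, hT⟩ := ih
    refine ⟨m + 1, fun k => Nat.casesOn k v γ, ⟨rfl, ?_, ?_, ?_⟩, ?_, hT⟩
    · intro a ha b hb hab
      cases a with
      | zero =>
        cases b with
        | zero => rfl
        | succ b => exact absurd hab.symm (hU b (by omega)).2
      | succ a =>
        cases b with
        | zero => exact absurd hab (hU a (by omega)).2
        | succ b => rw [hinj a (by omega) b (by omega) hab]
    · intro a ha
      cases a with
      | zero => simpa [h0] using hR
      | succ a => exact hadj a (by omega)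
    · intro a ha
      cases a with
      | zero => simpa using hw
      | succ a =>
        have := hω a (by omega)
        change ω (γ a) = ξ (i + (a + 1))
        rw [show i + (a + 1) = i + 1 + a by ring]
        exact this
    · intro a ha
      cases a with
      | zero => exact hv
      | succ a => exact (hU a (by omega)).1

lemma ev_sub (ξ : ℕ → Bool) (n : ℕ) :
    Ev adj (far d n) ξ (bx (fun _ => 0 : Vtx d) n) {((fun _ => 0), 0)} ⊆
      {ω | ∃ γ, WPath ω ξ (fun _ => 0) n γ} := by
  rintro ω ⟨c, rfl, hG⟩
  obtain ⟨m, γ, hγ, -, i, hi⟩ := hG.path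
  simp only [zero_add] at hγ
  refine ⟨γ, hγ.mono ?_⟩
  have := mem_bx.1 (path_bound hγ.2.2.1 m le_rfl) i
  rw [hγ.1] at this
  simp only [sub_zero] at this
  omega

lemma konig {ω : Config d} {ξ : ℕ → Bool} {v : Vtx d} (h : ∀ n, ∃ γ, WPath ω ξ v n γ) :
    seesWord ω ξ v := by
  let K : ℕ → Set (ℕ → Vtx d) := fun n =>
    {γ | (∀ k, γ k ∈ bx v k) ∧ WPath ω ξ v n γ}
  have cl1 : ∀ (k : ℕ) (P : Vtx d → Prop), IsClosed {γ : ℕ → Vtx d | P (γ k)} := by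
    intro k P
    exact (isClosed_discrete {x | P x}).preimage (continuous_apply k)
  have cl2 : ∀ (k l : ℕ) (P : Vtx d → Vtx d → Prop),
      IsClosed {γ : ℕ → Vtx d | P (γ k) (γ l)} := by
    intro k l P
    have hc : Continuous (fun γ : ℕ → Vtx d => (γ k, γ l)) :=
      (continuous_apply k).prodMk (continuous_apply l)
    exact (isClosed_discrete {x : Vtx d × Vtx d | P x.1 x.2}).preimage hc
  have clP : ∀ n, IsClosed {γ | WPath ω ξ v n γ} := by
    intro n
    have : {γ | WPath ω ξ v n γ} = {γ | γ 0 = v} ∩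
        ((⋂ i, ⋂ j, {γ | i ≤ n → j ≤ n → γ i = γ j → i = j}) ∩
        ((⋂ i, {γ | i < n → adj (γ i) (γ (i + 1))}) ∩ (⋂ i, {γ | i ≤ n → ω (γ i) = ξ i}))) := by
      ext γ
      simp only [WPath, mem_inter_iff, mem_iInter, mem_ofPred_eq]
      constructor
      · rintro ⟨a, b, c, e⟩
        exact ⟨a, fun i j hi hj => b i hi j hj, c, e⟩
      · rintro ⟨a, b, c, e⟩
        exact ⟨a, fun i hi j hj => b i j hi hj, c, e⟩
    rw [this]
    refine (cl1 0 (· = v)).inter (IsClosed.inter ?_ (IsClosed.inter ?_ ?_))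
    · exact isClosed_iInter fun i => isClosed_iInter fun j =>
        cl2 i j (fun x y => i ≤ n → j ≤ n → x = y → i = j)
    · exact isClosed_iInter fun i => cl2 i (i + 1) (fun x y => i < n → adj x y)
    · exact isClosed_iInter fun i => cl1 i (fun x => i ≤ n → ω x = ξ i)
  have clB : {γ : ℕ → Vtx d | ∀ k, γ k ∈ bx v k} = Set.univ.pi (fun k => (bx v k : Set (Vtx d))) := by
    ext γ; simp [Set.mem_pi]
  have cB : IsCompact {γ : ℕ → Vtx d | ∀ k, γ k ∈ bx v k} := by
    rw [clB]
    exact isCompact_univ_pi fun k => (bx v k).finite_toSet.isCompact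
  have hKc : ∀ n, IsClosed (K n) := fun n => cB.isClosed.inter (clP n)
  obtain ⟨γ, hγ⟩ := IsCompact.nonempty_iInter_of_sequence_nonempty_isCompact_isClosed K
    (fun n γ hγ => ⟨hγ.1, hγ.2.mono (Nat.le_succ n)⟩)
    (fun n => by
      obtain ⟨γ, hγ⟩ := h n
      refine ⟨fun k => γ (min k n), ?_, ?_, ?_, ?_, ?_⟩
      · intro k
        have := path_bound hγ.2.2.1 (min k n) (min_le_right _ _)
        rw [hγ.1] at this
        rw [mem_bx] at this ⊢
        intro i
        have h1 := this i
        have h2 : ((min k n : ℕ) : ℤ) ≤ k := by exact_mod_cast min_le_left k n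
        exact h1.trans h2
      · simpa using hγ.1
      · intro i hi j hj
        simp only [min_eq_left hi, min_eq_left hj]
        exact hγ.2.1 i hi j hj
      · intro i hi
        simp only [min_eq_left hi.le, min_eq_left (show i + 1 ≤ n by omega)]
        exact hγ.2.2.1 i hi
      · intro i hi
        simp only [min_eq_left hi]
        exact hγ.2.2.2 i hi)
    (cB.inter_right (clP 0)) hKc
  have hγ' : ∀ n, WPath ω ξ v n γ := fun n => (mem_iInter.1 hγ n).2
  refine ⟨γ, (hγ' 0).1, ?_, fun i => (hγ' (i + 1)).2.2.1 i (by omega), fun _ => trivial,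
    fun i => (hγ' i).2.2.2 i le_rfl⟩
  intro i j hij
  exact (hγ' (max i j)).2.1 i (le_max_left _ _) j (le_max_right _ _) hij

lemma sees_iff {ω : Config d} {ξ : ℕ → Bool} {v : Vtx d} :
    seesWord ω ξ v ↔ ∀ n, ∃ γ, WPath ω ξ v n γ := by
  refine ⟨?_, konig⟩
  rintro ⟨γ, h0, hinj, hadj, -, hω⟩ n
  exact ⟨γ, h0, fun i _ j _ h => hinj h, fun i _ => hadj i, fun i _ => hω i⟩

lemma meas_path (ξ : ℕ → Bool) (v : Vtx d) (n : ℕ) :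
    MeasurableSet {ω : Config d | ∃ γ, WPath ω ξ v n γ} := by
  refine Dep.measurable (S := bx v n) ?_
  rintro ω ω' h ⟨γ, hγ⟩
  refine ⟨γ, hγ.1, hγ.2.1, hγ.2.2.1, fun i hi => ?_⟩
  rw [← h, hγ.2.2.2 i hi]
  have := path_bound hγ.2.2.1 i hi
  rw [hγ.1] at this
  rw [Finset.mem_coe, mem_bx]
  intro j
  have h1 := mem_bx.1 this j
  have : (i : ℤ) ≤ n := by exact_mod_cast hi
  omega

lemma meas_sees (ξ : ℕ → Bool) (v : Vtx d) : MeasurableSet {ω : Config d | seesWord ω ξ v} := by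
  have : {ω : Config d | seesWord ω ξ v} = ⋂ n, {ω | ∃ γ, WPath ω ξ v n γ} := by
    ext ω; simp [sees_iff]
  rw [this]
  exact MeasurableSet.iInter fun n => meas_path ξ v n

lemma meas_all (ξ : ℕ → Bool) : MeasurableSet {ω : Config d | ∃ v, seesWord ω ξ v} := by
  have : {ω : Config d | ∃ v, seesWord ω ξ v} = ⋃ v, {ω | seesWord ω ξ v} := by
    ext ω; simp
  rw [this]
  exact MeasurableSet.iUnion fun v => meas_sees ξ v

lemma sees_pos {p q : ℝ} (hq0 : 0 ≤ q) (hqp : q ≤ p) (hqp' : q ≤ 1 - p)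
    {μ ν : Measure (Config d)} (hμ : IsBernoulliFam q μ) (hν : IsBernoulliFam p ν)
    (ξ : ℕ → Bool) :
    μ.real {ω | PercolatesAt ω (fun _ => 0)} ≤ ν.real {ω | seesWord ω ξ (fun _ => 0)} := by
  have := hμ.1
  have := hν.1
  have h1 : ∀ n, μ.real {ω | PercolatesAt ω (fun _ => 0)} ≤
      ν.real {ω | ∃ γ, WPath ω ξ (fun _ => 0) n γ} := fun n =>
    (measureReal_mono (perc_sub n)).trans
      ((compare hq0 hqp hqp' hμ hν ξ _ _ rfl _).trans (measureReal_mono (ev_sub ξ n)))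
  have e : {ω : Config d | seesWord ω ξ (fun _ => 0)} =
      ⋂ n, {ω | ∃ γ, WPath ω ξ (fun _ => 0) n γ} := by
    ext ω; simp [sees_iff]
  have ht : Filter.Tendsto (fun n => ν {ω : Config d | ∃ γ, WPath ω ξ (fun _ => 0) n γ})
      Filter.atTop (nhds (ν {ω : Config d | seesWord ω ξ (fun _ => 0)})) := by
    rw [e]
    refine tendsto_measure_iInter_atTop (fun n => (meas_path ξ _ n).nullMeasurableSet) ?_
      ⟨0, measure_ne_top _ _⟩
    intro m n hmn ω hω
    obtain ⟨γ, hγ⟩ := hω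
    exact ⟨γ, hγ.mono hmn⟩
  have ht' := (ENNReal.tendsto_toReal (measure_ne_top ν _)).comp ht
  exact ge_of_tendsto' ht' h1

end lattice

section zeroone
variable {d : ℕ}
open scoped symmDiff

/-- shift -/
def shift (a : Vtx d) (ω : Config d) : Config d := fun v => ω (v + a)

lemma measurable_shift (a : Vtx d) : Measurable (shift a) :=
  measurable_pi_lambda _ fun v => measurable_pi_apply (v + a)

lemma map_shift {p : ℝ} (h0 : 0 ≤ p) (h1 : p ≤ 1) {μ : Measure (Config d)}
    (h : IsBernoulliFam p μ) (a : Vtx d) : MeasurePreserving (shift a) μ μ := by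
  have := bern_prob h0 h1
  refine ⟨measurable_shift a, ?_⟩
  rw [h.eq h0 h1]
  exact Measure.map_infinitePi_infinitePi_of_inj (P := fun _ : Vtx d => bern p)
    (f := fun v : Vtx d => v + a) (add_left_injective a)

lemma sees_shift (ξ : ℕ → Bool) (a : Vtx d) :
    shift a ⁻¹' {ω : Config d | ∃ v, seesWord ω ξ v} = {ω | ∃ v, seesWord ω ξ v} := by
  have key : ∀ (b : Vtx d) (ω : Config d), (∃ v, seesWord (shift b ω) ξ v) →
      ∃ v, seesWord ω ξ v := by
    rintro b ω ⟨v, γ, h0, hinj, hadj, -, hω⟩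
    refine ⟨v + b, fun k => γ k + b, by simp [h0], fun i j hij => hinj (by simpa using hij),
      fun i => ?_, fun _ => trivial, hω⟩
    have := hadj i
    simpa [adj] using this
  ext ω
  refine ⟨key a ω, fun h => key (-a) (shift a ω) ?_⟩
  have : shift (-a) (shift a ω) = ω := by
    funext v; simp [shift]
  rw [this]; exact h

lemma zero_one {p : ℝ} (h0 : 0 ≤ p) (h1 : p ≤ 1) (hd : 0 < d) {μ : Measure (Config d)}
    (h : IsBernoulliFam p μ) {A : Set (Config d)} (hA : MeasurableSet A)
    (hinv : ∀ a, shift a ⁻¹' A = A) : μ.real A = 0 ∨ μ.real A = 1 := by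
  have := h.1
  suffices hs : ∀ ε : ℝ, 0 < ε → |μ.real A - μ.real A ^ 2| ≤ 4 * ε by
    have hz : |μ.real A - μ.real A ^ 2| ≤ 0 := by
      refine le_of_forall_pos_le_add fun ε hε => ?_
      have := hs (ε / 4) (by positivity)
      linarith
    have hz' := abs_eq_zero.1 (le_antisymm hz (abs_nonneg _))
    have : μ.real A * (1 - μ.real A) = 0 := by linarith
    rcases mul_eq_zero.1 this with h | h
    · exact .inl h
    · right; linarith
  intro ε hε
  obtain ⟨B, hBc, hB⟩ := exists_measure_symmDiff_lt_of_generateFrom_isSetRing (μ := μ)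
    (isSetRing_measurableCylinders (α := fun _ : Vtx d => Bool))
    ⟨{univ}, countable_singleton _, by
      rw [singleton_subset_iff]; exact univ_mem_measurableCylinders _, by simp⟩
    generateFrom_measurableCylinders.symm hA (ε := ENNReal.ofReal ε) (by simpa using hε)
  obtain ⟨S, D, -, rfl⟩ := (mem_measurableCylinders _).1 hBc
  set B : Set (Config d) := cylinder (α := fun _ : Vtx d => Bool) S D with hBdef
  have hBS : Dep B S := by
    intro ω ω' hh hω
    rw [hBdef, mem_cylinder] at *
    have e : S.restrict ω' = S.restrict ω := by
      funext v
      exact (hh v.1 v.2).symm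
    rw [e]
    exact hω
  classical
  have : Nonempty (Fin d) := ⟨⟨0, hd⟩⟩
  obtain ⟨a, ha⟩ := Infinite.exists_notMem_finset
    ((S ×ˢ S).image (fun x : Vtx d × Vtx d => x.1 - x.2))
  let S' := S.image (fun v => v + a)
  have hdisj : Disjoint S S' := by
    rw [Finset.disjoint_left]
    intro v hv hv'
    obtain ⟨w, hw, rfl⟩ := Finset.mem_image.1 hv'
    exact ha (Finset.mem_image.2 ⟨(w + a, w), by simp [hv, hw], by simp⟩)
  have hB' : Dep (shift a ⁻¹' B) S' := by
    intro ω ω' hh hω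
    refine hBS (shift a ω) (shift a ω') (fun v hv => hh _ ?_) hω
    exact Finset.mem_coe.2 (Finset.mem_image_of_mem _ hv)
  have hmp := map_shift h0 h1 h a
  have mB : MeasurableSet B := hBS.measurable
  have hind := h.inter h0 h1 hdisj hBS hB'
  have eB : μ.real (shift a ⁻¹' B) = μ.real B := by
    rw [measureReal_def, hmp.measure_preimage mB.nullMeasurableSet, measureReal_def]
  rw [eB] at hind
  have hε1 : μ.real (B ∆ A) ≤ ε := by
    rw [measureReal_def]
    exact ENNReal.toReal_le_of_le_ofReal hε.le hB.le
  have hε2 : μ.real (shift a ⁻¹' (B ∆ A)) ≤ ε := by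
    rw [measureReal_def, hmp.measure_preimage (mB.symmDiff hA).nullMeasurableSet,
      ← measureReal_def]
    exact hε1
  have d1 := abs_measureReal_sub_le_measureReal_symmDiff (μ := μ) mB.nullMeasurableSet
    hA.nullMeasurableSet
  have d2 := abs_measureReal_sub_le_measureReal_symmDiff (μ := μ)
    (mB.inter (measurable_shift a mB)).nullMeasurableSet hA.nullMeasurableSet
  have d3 : μ.real ((B ∩ shift a ⁻¹' B) ∆ A) ≤
      μ.real (B ∆ A) + μ.real (shift a ⁻¹' (B ∆ A)) := by
    refine (measureReal_mono ?_).trans (measureReal_union_le _ _)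
    intro ω hω
    have hi : shift a ω ∈ A ↔ ω ∈ A := by
      conv_rhs => rw [← hinv a]
      rfl
    simp only [Set.mem_symmDiff, mem_inter_iff, mem_preimage, mem_union, hi] at *
    tauto
  have b0 : 0 ≤ μ.real B := measureReal_nonneg
  have b1 : μ.real B ≤ 1 := measureReal_le_one
  have a0 : 0 ≤ μ.real A := measureReal_nonneg
  have a1 : μ.real A ≤ 1 := measureReal_le_one
  rw [hind] at d2
  generalize μ.real A = x at *
  generalize μ.real B = y at *
  have d4 := d1.trans hε1
  have d5 : |y * y - x| ≤ 2 * ε := by linarith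
  have d6 : |y ^ 2 - x ^ 2| ≤ 2 * ε := by
    rw [show y ^ 2 - x ^ 2 = (y + x) * (y - x) by ring, abs_mul, abs_of_nonneg (by linarith)]
    have := abs_nonneg (y - x)
    nlinarith
  have d7 := abs_le.1 d5
  have d8 := abs_le.1 d6
  rw [abs_le]
  constructor <;> nlinarith [d7.1, d7.2, d8.1, d8.2]

lemma perc_one (hd : 0 < d) {μ : Measure (Config d)} (h : IsBernoulliFam 1 μ) :
    0 < μ {ω | PercolatesAt ω (fun _ => 0)} := by
  have := h.1
  have hall : ∀ᵐ ω ∂μ, ∀ v, ω v = true := by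
    rw [ae_all_iff]
    intro v
    have h2 := h.2 {v} (fun _ => false)
    simp only [Finset.mem_singleton, forall_eq, Finset.prod_singleton] at h2
    rw [ae_iff]
    simpa using h2
  have hsub : ∀ᵐ ω ∂μ, PercolatesAt ω (fun _ => 0) := by
    filter_upwards [hall] with ω hω
    let r : ℤ → Vtx d := fun k i => if i = ⟨0, hd⟩ then k else 0
    have hr : Function.Injective r := by
      intro k l hkl
      have := congrFun hkl ⟨0, hd⟩
      simpa [r] using this
    have hradj : ∀ k l : ℤ, (k - l) ^ 2 = 1 → adj (r k) (r l) := by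
      intro k l hkl
      unfold adj
      rw [Finset.sum_eq_single ⟨0, hd⟩]
      · simpa [r] using hkl
      · intro b _ hb; simp [r, hb]
      · simp
    refine ⟨Set.range r, ⟨0, by funext i; simp [r]⟩, Set.infinite_range_of_injective hr,
      fun u _ => hω u, ?_⟩
    rintro _ ⟨k, rfl⟩ _ ⟨l, rfl⟩
    rcases le_total k l with hkl | hkl
    · refine ⟨(l - k).toNat, fun n => r (k + n), by simp, ?_, ?_, fun i _ => ⟨_, rfl⟩⟩
      · simp only; congr 1; omega
      · intro i _; apply hradj; push_cast; ring
    · refine ⟨(k - l).toNat, fun n => r (k - n), by simp, ?_, ?_, fun i _ => ⟨_, rfl⟩⟩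
      · simp only; congr 1; omega
      · intro i _; apply hradj; push_cast; ring
  have : μ {ω | PercolatesAt ω (fun _ => 0)} = 1 := by
    have := measure_congr (show ({ω | PercolatesAt ω (fun _ => 0)} : Set (Config d)) =ᵐ[μ] univ by
      filter_upwards [hsub] with ω hω
      exact propext ⟨fun _ => trivial, fun _ => hω⟩)
    rw [this, measure_univ]
  rw [this]; exact one_pos

end zeroone

/-- **Every fixed word is seen** : for `d ≥ 3` and
`p ∈ (p_c^site(ℤ^d), 1 − p_c^site(ℤ^d))`, every fixed word `ξ` is almost surely seen
from some vertex of `ℤ^d`. -/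
theorem every_fixed_word_seen
    (d : ℕ) (hd : 3 ≤ d)
    (ℙ : ℝ → Measure (Config d))
    (hP : ∀ q : ℝ, 0 ≤ q → q ≤ 1 → IsBernoulliFam q (ℙ q))
    (p : ℝ) (hp : pcSite d ℙ < p) (hp' : p < 1 - pcSite d ℙ)
    (ξ : ℕ → Bool) :
    ℙ p {ω | ∃ v : Vtx d, seesWord ω ξ v} = 1 := by
  have hd0 : 0 < d := by omega
  set s : Set ℝ := {p : ℝ | p ∈ Set.Icc (0 : ℝ) 1 ∧ 0 < ℙ p {ω | PercolatesAt ω (fun _ => 0)}}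
    with hs
  have hne : s.Nonempty := ⟨1, ⟨by norm_num, by norm_num⟩,
    perc_one hd0 (hP 1 (by norm_num) (by norm_num))⟩
  have hpc : pcSite d ℙ = sInf s := rfl
  have hpc0 : 0 ≤ sInf s := Real.sInf_nonneg fun x hx => hx.1.1
  rw [hpc] at hp hp'
  obtain ⟨q, hq, hqlt⟩ := exists_lt_of_csInf_lt hne
    (lt_min hp (show sInf s < 1 - p by linarith))
  have hqp := (hqlt.trans_le (min_le_left _ _)).le
  have hqp' := (hqlt.trans_le (min_le_right _ _)).le
  have hp0 : 0 ≤ p := by linarith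
  have hp1 : p ≤ 1 := by linarith
  have hμ := hP q hq.1.1 hq.1.2
  have hν := hP p hp0 hp1
  have := hμ.1
  have := hν.1
  have h1 := sees_pos hq.1.1 hqp hqp' hμ hν ξ
  have h2 : 0 < (ℙ q).real {ω | PercolatesAt ω (fun _ => 0)} :=
    ENNReal.toReal_pos hq.2.ne' (measure_ne_top _ _)
  have h3 : (ℙ p).real {ω : Config d | seesWord ω ξ (fun _ => 0)} ≤
      (ℙ p).real {ω : Config d | ∃ v, seesWord ω ξ v} :=
    measureReal_mono fun ω hω => ⟨_, hω⟩
  rcases zero_one hp0 hp1 hd0 hν (meas_all ξ) (sees_shift ξ) with h | h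
  · linarith
  · rw [measureReal_def] at h
    rwa [ENNReal.toReal_eq_one_iff] at h

end PercWords
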